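/- For field operators w(f) = a(f) + a⁺(f) on the Q-Fock space, the mixed vacuum moments are given by the Q-deformed Wick formula: ⟨w(f_n)···w(f_1)Ω, Ω⟩ = Σ_{V ∈ P({1,...,n})} ∫···∫ f_n(x_n)···f_1(x_1) Π_{crossings (k,l) of V} Q(x_{a_k}, x_{a_l}) Π_{(a,z)∈V} δ(x_a − x_z) dx. In particular, ⟨w(f_n)···w(f_1)Ω,Ω⟩ = 0 whenever n is odd. -/

import Mathlib

open MeasureTheory
open scoped Classical

noncomputable section

/-- A vector in the algebraic Fock space over functions on `ℝ^j`, given by its sequence of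
`n`-particle wave functions. -/
def FockFun (j : ℕ) : Type :=
  (n : ℕ) → ((Fin n → EuclideanSpace ℝ (Fin j)) → ℝ)

/-- The `Q`-deformed creation operator (at the level of functions): `a⁺(h) f = h ⊗ f`. -/
def crOp (j : ℕ) (h : EuclideanSpace ℝ (Fin j) → ℝ) (F : FockFun j) : FockFun j :=
  fun n =>
    match n with
    | 0 => fun _ => 0
    | m + 1 => fun x => h (x 0) * F m (x ∘ Fin.succ)

/-- The `Q`-deformed annihilation operator (at the level of functions):
`(a(h) F)ₙ (x₁,…,xₙ) = ∫_U h(y) Σ_{k=0}^{n} (Π_{m<k} Q(y,x_m)) Fₙ₊₁(x₁,…,x_k,y,x_{k+1},…,xₙ) dy`,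
which is `l(h) R_Q^{(n+1)}` in the notation of the paper. -/
def anOp (j : ℕ) (U : Set (EuclideanSpace ℝ (Fin j)))
    (Q : EuclideanSpace ℝ (Fin j) → EuclideanSpace ℝ (Fin j) → ℝ)
    (h : EuclideanSpace ℝ (Fin j) → ℝ) (F : FockFun j) : FockFun j :=
  fun n x =>
    ∫ y in U, h y * ∑ k : Fin (n + 1),
      (∏ m ∈ Finset.univ.filter (fun m : Fin n => (m : ℕ) < (k : ℕ)), Q y (x m)) *
        F (n + 1) (Fin.insertNth k y x)

/-- The vacuum vector `Ω`. -/
def vac (j : ℕ) : FockFun j := fun n _ => if n = 0 then 1 else 0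

/-- The vacuum expectation `⟨F, Ω⟩_Q`, i.e. the `0`-particle component of `F`. -/
def vacExp (j : ℕ) (F : FockFun j) : ℝ := F 0 (fun i => i.elim0)

/-- `V` is a pair partition of `{0, …, n-1}`: every pair `(a, z) ∈ V` has `a < z`, and every
element belongs to exactly one pair. -/
def IsPairing (n : ℕ) (V : Finset (Fin n × Fin n)) : Prop :=
  (∀ p ∈ V, p.1 < p.2) ∧
    ∀ k : Fin n, ∃! p : Fin n × Fin n, p ∈ V ∧ (p.1 = k ∨ p.2 = k)

/-- The set of crossings of a pairing: pairs of pairs `(a,z), (a',z')` with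
`a < a' < z < z'`. -/
def crossings (n : ℕ) (V : Finset (Fin n × Fin n)) :
    Finset ((Fin n × Fin n) × (Fin n × Fin n)) :=
  (V ×ˢ V).filter (fun c => c.1.1 < c.2.1 ∧ c.2.1 < c.1.2 ∧ c.1.2 < c.2.2)

/-- The value `∫⋯∫ f_n(x_n)⋯f_1(x_1) Q_V^n(x) δ_V^n(x) dx₁⋯dxₙ` attached to a pairing `V`:
the Dirac deltas identify the two variables of each pair, leaving one integration variable
per pair, the functions of the two legs of each pair are evaluated at that variable, and each
crossing contributes a factor of `Q`. -/
def pairingIntegral (j n : ℕ) (U : Set (EuclideanSpace ℝ (Fin j)))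
    (Q : EuclideanSpace ℝ (Fin j) → EuclideanSpace ℝ (Fin j) → ℝ)
    (f : Fin n → (EuclideanSpace ℝ (Fin j) → ℝ))
    (V : Finset (Fin n × Fin n)) : ℝ :=
  ∫ x : {p // p ∈ V} → EuclideanSpace ℝ (Fin j) in {x | ∀ p, x p ∈ U},
    (∏ p : {p // p ∈ V}, f p.1.1 (x p) * f p.1.2 (x p)) *
      ∏ c ∈ (crossings n V).attach,
        Q (x ⟨c.1.1, (Finset.mem_product.mp (Finset.mem_filter.mp c.2).1).1⟩)
          (x ⟨c.1.2, (Finset.mem_product.mp (Finset.mem_filter.mp c.2).1).2⟩)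


/-- The `Q`-deformed field operator `w(h) = a(h) + a⁺(h)` at the level of functions. -/
def wOp (j : ℕ) (U : Set (EuclideanSpace ℝ (Fin j)))
    (Q : EuclideanSpace ℝ (Fin j) → EuclideanSpace ℝ (Fin j) → ℝ)
    (h : EuclideanSpace ℝ (Fin j) → ℝ) (F : FockFun j) : FockFun j :=
  fun n x => anOp j U Q h F n x + crOp j h F n x

/-!
Expand `w(f_{t-1}) ⋯ w(f_0) Ω` one operator at a time. Its `m`-particle component is a sum over
the *partial pairings* of `0, …, t - 1`: some points are paired, and the `m` remaining *open*
points carry the arguments of the wave function, the most recent point first. When `w(f_t)` is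
applied, its creation part leaves `t` open, and the `k`-th summand of its annihilation part pairs
`t` with the `k`-th open point. The factors `Q` of this summand belong to the open points under
the new pair; when such a point is paired later on, its pair crosses the new one. Hence each
crossing is counted exactly once, when the first of its two pairs closes, and at `t = n`, `m = 0`
the expansion is the sum over all pairings.
-/

section PartialPairings

theorem eq_of_strictAnti_of_range_eq {ι α : Type*} [LinearOrder ι] [WellFoundedLT ι] [Preorder α]
    {L M : ι → α} (hL : StrictAnti L) (hM : StrictAnti M) (h : Set.range L = Set.range M) :
    L = M :=
  (StrictMono.range_inj (γ := αᵒᵈ) hL.dual_right hM.dual_right).1 h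

theorem range_removeNth {α : Type*} {m : ℕ} {L : Fin (m + 1) → α} (hL : Function.Injective L)
    (k : Fin (m + 1)) : Set.range (k.removeNth L) = Set.range L \ {L k} := by
  rw [← Set.image_univ (f := L), ← Set.image_singleton, ← Set.image_sdiff hL,
    ← Set.compl_eq_univ_sdiff, ← Fin.range_succAbove, ← Set.range_comp]
  rfl

theorem exists_strictAnti_insertNth {α : Type*} [LinearOrder α] {m : ℕ} {L : Fin m → α}
    (hL : StrictAnti L) {s : α} (hs : s ∉ Set.range L) :
    ∃ k : Fin (m + 1), StrictAnti (k.insertNth s L : Fin (m + 1) → α) := by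
  have hcard : (insert s (Finset.univ.image L)).card = m + 1 := by
    rw [Finset.card_insert_of_notMem (by simpa using hs),
      Finset.card_image_of_injective _ hL.injective, Finset.card_univ, Fintype.card_fin]
  set M : Fin (m + 1) → α := Finset.orderEmbOfFin _ hcard ∘ Fin.rev
  have hM : StrictAnti M := (OrderEmbedding.strictMono _).comp_strictAnti Fin.rev_strictAnti
  have hM_range : Set.range M = insert s (Set.range L) := by
    simp [M, Fin.rev_surjective.range_comp]
  obtain ⟨k, hk⟩ : s ∈ Set.range M := hM_range ▸ Set.mem_insert _ _
  have hLM : k.removeNth M = L := by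
    refine eq_of_strictAnti_of_range_eq (hM.comp_strictMono k.strictMono_succAbove) hL ?_
    rw [range_removeNth hM.injective, hM_range, hk, Set.insert_sdiff_self_of_notMem hs]
  exact ⟨k, by rwa [← hk, ← hLM, Fin.insertNth_self_removeNth]⟩

variable {n m t : ℕ}

/-- The two points joined by a pair. -/
def legs (p : Fin n × Fin n) : Finset (Fin n) := {p.1, p.2}

theorem mem_legs {p : Fin n × Fin n} {k : Fin n} : k ∈ legs p ↔ p.1 = k ∨ p.2 = k := by
  simp [legs, eq_comm]

theorem disjoint_legs {p r : Fin n × Fin n} :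
    Disjoint (legs p) (legs r) ↔ p.1 ∉ legs r ∧ p.2 ∉ legs r := by
  rw [legs, Finset.disjoint_insert_left, Finset.disjoint_singleton_left]

/-- `V` is a partial pairing of the points `0, …, t - 1` whose unpaired, or open, points are
`L 0 > L 1 > ⋯`.  The open points label the arguments of a summand of the `m`-particle wave
function; the order is decreasing because creation inserts the new argument in front. -/
structure IsPartialPairing (t : ℕ) (V : Finset (Fin n × Fin n)) (L : Fin m → Fin n) : Prop where
  strictAnti : StrictAnti L
  fst_lt_snd : ∀ p ∈ V, p.1 < p.2
  snd_lt : ∀ p ∈ V, p.2 < t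
  pairwiseDisjoint : (V : Set (Fin n × Fin n)).PairwiseDisjoint legs
  mem_range_iff : ∀ k, k ∈ Set.range L ↔ k < t ∧ ∀ p ∈ V, k ∉ legs p

namespace IsPartialPairing

variable {V : Finset (Fin n × Fin n)}

theorem lt_of_mem_legs {t : ℕ} {L : Fin m → Fin n} (h : IsPartialPairing t V L)
    {p : Fin n × Fin n} (hp : p ∈ V) {k : Fin n} (hk : k ∈ legs p) : k < t := by
  have := h.fst_lt_snd p hp
  have := h.snd_lt p hp
  grind [mem_legs]

theorem zero_iff {L : Fin m → Fin n} : IsPartialPairing 0 V L ↔ V = ∅ ∧ m = 0 := by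
  constructor
  · intro h
    exact ⟨Finset.eq_empty_of_forall_notMem fun p hp => Nat.not_lt_zero _ (h.snd_lt p hp),
      Nat.eq_zero_of_not_pos fun hm => absurd ((h.mem_range_iff _).1 ⟨⟨0, hm⟩, rfl⟩).1 (by simp)⟩
  · rintro ⟨rfl, rfl⟩
    exact ⟨Subsingleton.strictAnti L, by simp, by simp, by simp, by simp⟩

theorem iff_isPairing {L : Fin 0 → Fin n} : IsPartialPairing n V L ↔ IsPairing n V := by
  constructor
  · intro h
    refine ⟨h.fst_lt_snd, fun k => ?_⟩
    obtain ⟨p, hp, hk⟩ : ∃ p ∈ V, k ∈ legs p := by simpa using h.mem_range_iff k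
    refine ⟨p, ⟨hp, mem_legs.1 hk⟩, fun r hr => ?_⟩
    exact h.pairwiseDisjoint.elim_finset hr.1 hp k (mem_legs.2 hr.2) hk
  · intro h
    refine ⟨Subsingleton.strictAnti L, h.1, fun p _ => p.2.2, fun p hp r hr hpr => ?_, fun k => ?_⟩
    · refine Finset.disjoint_left.2 fun k hkp hkr => hpr ?_
      exact (h.2 k).unique ⟨hp, mem_legs.1 hkp⟩ ⟨hr, mem_legs.1 hkr⟩
    · obtain ⟨p, ⟨hp, hk⟩, -⟩ := h.2 k
      simpa using ⟨p.1, p.2, hp, mem_legs.2 hk⟩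

variable {t : Fin n}

theorem cons_iff {L : Fin m → Fin n} :
    IsPartialPairing (t + 1) V (Fin.cons t L : Fin (m + 1) → Fin n) ↔ IsPartialPairing t V L := by
  constructor
  · intro h
    obtain ⟨hLt, hL⟩ := (Fin.strictMono_cons (α := (Fin n)ᵒᵈ)).1 h.strictAnti
    have hLt : ∀ k ∈ Set.range L, k < t := Set.forall_mem_range.2 hLt
    have hrange := h.mem_range_iff
    simp only [Fin.range_cons, Set.mem_insert_iff] at hrange
    have ht : ∀ p ∈ V, t ∉ legs p := ((hrange t).1 (.inl rfl)).2
    refine ⟨hL, h.fst_lt_snd, fun p hp => ?_, h.pairwiseDisjoint, fun k => ?_⟩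
    · have := h.snd_lt p hp
      grind [mem_legs]
    · grind
  · intro h
    refine ⟨(Fin.strictMono_cons (α := (Fin n)ᵒᵈ)).2 ⟨fun i => ?_, h.strictAnti⟩, h.fst_lt_snd,
      fun p hp => (h.snd_lt p hp).trans t.1.lt_succ_self, h.pairwiseDisjoint, fun k => ?_⟩
    · exact ((h.mem_range_iff _).1 ⟨i, rfl⟩).1
    · have hV : ∀ p ∈ V, ∀ k ∈ legs p, k < t := fun p hp k hk => h.lt_of_mem_legs hp hk
      have hk := h.mem_range_iff k
      simp only [Fin.range_cons, Set.mem_insert_iff]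
      grind

theorem insert_pair_iff {L : Fin (m + 1) → Fin n} (hL : StrictAnti L) {k : Fin (m + 1)}
    (hV : (L k, t) ∉ V) :
    IsPartialPairing (t + 1) (insert (L k, t) V) (k.removeNth L) ↔ IsPartialPairing t V L := by
  have hrange : ∀ s, s ∈ Set.range (k.removeNth L) ↔ s ∈ Set.range L ∧ s ≠ L k := by
    simp [range_removeNth hL.injective]
  have hdisj : ((insert (L k, t) V : Finset _) : Set (Fin n × Fin n)).PairwiseDisjoint legs ↔
      (V : Set (Fin n × Fin n)).PairwiseDisjoint legs ∧
        ∀ p ∈ V, L k ∉ legs p ∧ t ∉ legs p := by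
    rw [Finset.coe_insert, Set.pairwiseDisjoint_insert_of_notMem (by exact_mod_cast hV)]
    simp only [disjoint_legs, Finset.mem_coe]
  constructor
  · rintro ⟨-, hlt, hbound, hdisj', hopen⟩
    obtain ⟨hV_disj, hnew⟩ := hdisj.1 hdisj'
    rw [Finset.forall_mem_insert] at hlt hbound
    refine ⟨hL, hlt.2, fun p hp => ?_, hV_disj, fun s => ?_⟩
    · have := hbound.2 p hp
      grind [mem_legs]
    · have := hopen s
      have := hlt.1
      simp only [hrange, Finset.forall_mem_insert, mem_legs] at *
      grind
  · intro h
    obtain ⟨hk, hkV⟩ := (h.mem_range_iff (L k)).1 ⟨k, rfl⟩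
    have htV : ∀ p ∈ V, t ∉ legs p := fun p hp ht => (h.lt_of_mem_legs hp ht).false
    refine ⟨hL.comp_strictMono k.strictMono_succAbove, ?_, ?_,
      hdisj.2 ⟨h.pairwiseDisjoint, fun p hp => ⟨hkV p hp, htV p hp⟩⟩, fun s => ?_⟩
    · exact Finset.forall_mem_insert _ _ _ |>.2 ⟨hk, h.fst_lt_snd⟩
    · exact Finset.forall_mem_insert _ _ _ |>.2
        ⟨t.1.lt_succ_self, fun p hp => (h.snd_lt p hp).trans t.1.lt_succ_self⟩
    · rw [hrange, h.mem_range_iff, Finset.forall_mem_insert, mem_legs]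
      grind

theorem pair_notMem {L : Fin m → Fin n} (h : IsPartialPairing t V L) (s : Fin n) : (s, t) ∉ V :=
  fun hV => (h.snd_lt _ hV).false

theorem insert_pair {L : Fin (m + 1) → Fin n} (h : IsPartialPairing t V L) (k : Fin (m + 1)) :
    IsPartialPairing (t + 1) (insert (L k, t) V) (k.removeNth L) :=
  (insert_pair_iff h.strictAnti (h.pair_notMem _)).2 h

theorem insert_pair_injective {V' : Finset (Fin n × Fin n)} {L L' : Fin (m + 1) → Fin n}
    (h : IsPartialPairing t V L) (h' : IsPartialPairing t V' L') {k k' : Fin (m + 1)}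
    (hV : insert (L k, t) V = insert (L' k', t) V') : V = V' ∧ L = L' ∧ k = k' := by
  have hk : L k = L' k' := by
    have : (L k, t) ∈ insert (L' k', t) V' := hV ▸ Finset.mem_insert_self _ _
    simpa [h'.pair_notMem] using this
  obtain rfl : V = V' := by
    rw [← Finset.erase_insert (h.pair_notMem (L k)), hV, hk,
      Finset.erase_insert (h'.pair_notMem (L' k'))]
  obtain rfl : L = L' := eq_of_strictAnti_of_range_eq h.strictAnti h'.strictAnti <|
    Set.ext fun s => (h.mem_range_iff s).trans (h'.mem_range_iff s).symm
  exact ⟨rfl, rfl, h.strictAnti.injective hk⟩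

theorem exists_pair {L : Fin m → Fin n} (h : IsPartialPairing (t + 1) V L)
    (ht : t ∉ Set.range L) : ∃ s, (s, t) ∈ V := by
  rw [h.mem_range_iff] at ht
  obtain ⟨p, hp, htp⟩ : ∃ p ∈ V, t ∈ legs p := by simpa using ht
  have := h.fst_lt_snd p hp
  have := h.snd_lt p hp
  have hp2 : p.2 = t := by grind [mem_legs]
  exact ⟨p.1, by rwa [← hp2]⟩

theorem exists_eq_insert {L : Fin m → Fin n} (h : IsPartialPairing (t + 1) V L)
    (ht : t ∉ Set.range L) :
    ∃ (V' : Finset (Fin n × Fin n)) (L' : Fin (m + 1) → Fin n) (k : Fin (m + 1)),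
      IsPartialPairing t V' L' ∧ V = insert (L' k, t) V' ∧ L = k.removeNth L' := by
  obtain ⟨s, hs⟩ := h.exists_pair ht
  have hs_open : s ∉ Set.range L := fun hsL =>
    ((h.mem_range_iff s).1 hsL).2 _ hs (mem_legs.2 (.inl rfl))
  obtain ⟨k, hk⟩ := exists_strictAnti_insertNth h.strictAnti hs_open
  have hV : V = insert ((k.insertNth s L : Fin (m + 1) → Fin n) k, t) (V.erase (s, t)) := by
    rw [Fin.insertNth_apply_same, Finset.insert_erase hs]
  have hL : L = k.removeNth (k.insertNth s L : Fin (m + 1) → Fin n) := by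
    rw [Fin.removeNth_insertNth]
  refine ⟨V.erase (s, t), k.insertNth s L, k, ?_, hV, hL⟩
  rwa [← insert_pair_iff hk (k := k) (by simp), ← hV, ← hL]

end IsPartialPairing

theorem IsPairing.even {V : Finset (Fin n × Fin n)} (h : IsPairing n V) : Even n := by
  have hV : IsPartialPairing n V (Fin.elim0 : Fin 0 → Fin n) := IsPartialPairing.iff_isPairing.2 h
  have hcover : V.biUnion legs = Finset.univ := by
    refine Finset.eq_univ_of_forall fun k => ?_
    simpa using hV.mem_range_iff k
  have hcard : ∀ p ∈ V, (legs p).card = 2 := fun p hp => Finset.card_pair (h.1 p hp).ne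
  refine ⟨V.card, ?_⟩
  calc n = (V.biUnion legs).card := by rw [hcover, Finset.card_univ, Fintype.card_fin]
    _ = ∑ p ∈ V, (legs p).card := Finset.card_biUnion hV.pairwiseDisjoint
    _ = V.card + V.card := by
      rw [Finset.sum_congr rfl hcard, Finset.sum_const, smul_eq_mul, mul_two]

/-- The partial pairings of `0, …, t - 1` with `m` open points, as pairs `(V, L)`. -/
def partialPairings (n t m : ℕ) : Finset (Finset (Fin n × Fin n) × (Fin m → Fin n)) :=
  {σ | IsPartialPairing t σ.1 σ.2}

theorem mem_partialPairings {t : ℕ} {σ : Finset (Fin n × Fin n) × (Fin m → Fin n)} :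
    σ ∈ partialPairings n t m ↔ IsPartialPairing t σ.1 σ.2 := by
  simp [partialPairings]

section Sums

variable {M : Type*} [AddCommMonoid M] (t : Fin n)

theorem sum_partialPairings_open (G : Finset (Fin n × Fin n) × (Fin (m + 1) → Fin n) → M) :
    ∑ σ ∈ partialPairings n (t + 1) (m + 1) with t ∈ Set.range σ.2, G σ =
      ∑ σ ∈ partialPairings n t m, G (σ.1, Fin.cons t σ.2) := by
  symm
  refine Finset.sum_nbij (fun σ => (σ.1, Fin.cons t σ.2)) (fun σ hσ => ?_) ?_ ?_ fun _ _ => rfl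
  · rw [Finset.mem_filter, mem_partialPairings, IsPartialPairing.cons_iff, ← mem_partialPairings]
    exact ⟨hσ, 0, rfl⟩
  · rintro ⟨V, L⟩ - ⟨V', L'⟩ - h
    simpa using h
  · rintro ⟨V, L⟩ hσ
    simp only [Finset.coe_filter, mem_partialPairings, Set.mem_ofPred_eq] at hσ
    obtain ⟨hσ, i, hi⟩ := hσ
    have h_le : L 0 ≤ t := Nat.lt_succ_iff.1 ((hσ.mem_range_iff _).1 ⟨0, rfl⟩).1
    have hL : Fin.cons t (Fin.tail L) = L := by
      rw [← h_le.antisymm (hi ▸ hσ.strictAnti.antitone (Fin.zero_le i)), Fin.cons_self_tail]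
    refine ⟨(V, Fin.tail L), ?_, by simp only [hL]⟩
    rwa [Finset.mem_coe, mem_partialPairings, ← IsPartialPairing.cons_iff, hL]

theorem sum_partialPairings_closed (G : Finset (Fin n × Fin n) × (Fin m → Fin n) → M) :
    ∑ σ ∈ partialPairings n (t + 1) m with t ∉ Set.range σ.2, G σ =
      ∑ σ ∈ partialPairings n t (m + 1), ∑ k,
        G (insert (σ.2 k, t) σ.1, k.removeNth σ.2) := by
  rw [← Finset.sum_product']
  symm
  refine Finset.sum_nbij (fun τ => (insert (τ.1.2 τ.2, t) τ.1.1, τ.2.removeNth τ.1.2))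
    ?_ ?_ ?_ fun _ _ => rfl
  · rintro ⟨⟨V, L⟩, k⟩ hτ
    simp only [Finset.mem_product, mem_partialPairings, Finset.mem_univ, and_true] at hτ
    rw [Finset.mem_filter, mem_partialPairings]
    refine ⟨hτ.insert_pair k, ?_⟩
    rintro ⟨i, hi⟩
    exact ((hτ.mem_range_iff _).1 ⟨_, hi⟩).1.false
  · rintro ⟨⟨V, L⟩, k⟩ hτ ⟨⟨V', L'⟩, k'⟩ hτ' h
    simp only [Finset.coe_product, Set.mem_prod, Finset.mem_coe, mem_partialPairings,
      Finset.mem_univ, and_true] at hτ hτ'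
    obtain ⟨rfl, rfl, rfl⟩ := hτ.insert_pair_injective hτ' (Prod.mk.inj h).1
    rfl
  · rintro ⟨V, L⟩ hσ
    simp only [Finset.coe_filter, mem_partialPairings, Set.mem_ofPred_eq] at hσ
    obtain ⟨V', L', k, h, rfl, rfl⟩ := hσ.1.exists_eq_insert hσ.2
    exact ⟨((V', L'), k), by simpa [mem_partialPairings] using h, rfl⟩

theorem sum_partialPairings_isPairing (G : Finset (Fin n × Fin n) × (Fin 0 → Fin n) → M) :
    ∑ σ ∈ partialPairings n n 0, G σ = ∑ V with IsPairing n V, G (V, Fin.elim0) := by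
  refine Finset.sum_nbij Prod.fst ?_ ?_ ?_ fun σ _ =>
    congrArg G (Prod.ext rfl (Subsingleton.elim _ _))
  · simp [mem_partialPairings, IsPartialPairing.iff_isPairing]
  · exact fun σ _ τ _ h => Prod.ext h (Subsingleton.elim _ _)
  · intro V hV
    exact ⟨(V, Fin.elim0), by simpa [mem_partialPairings, IsPartialPairing.iff_isPairing] using hV,
      rfl⟩

end Sums

end PartialPairings

section Marginal

variable {ι : Type*} [DecidableEq ι] {X : ι → Type*} [∀ i, MeasurableSpace (X i)] {F : Type*}
  [NormedAddCommGroup F] [NormedSpace ℝ F]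

/-- The Bochner integral of `g` over the variables indexed by `A`, the others being read off `u`;
this is the counterpart of `MeasureTheory.lmarginal` for signed functions. -/
def marginal (μ : ∀ i, Measure (X i)) (A : Finset ι) (g : (∀ i, X i) → F) (u : ∀ i, X i) : F :=
  ∫ y : (∀ i : A, X i), g (Function.updateFinset u A y) ∂Measure.pi fun i : A => μ i

theorem marginal_empty [CompleteSpace F] (μ : ∀ i, Measure (X i)) (g : (∀ i, X i) → F) :
    marginal μ ∅ g = g := by
  ext u
  rw [marginal, Measure.pi_of_empty, integral_dirac, Function.updateFinset_empty]

theorem marginal_eq_of_dependsOn (μ : ∀ i, Measure (X i)) {A : Finset ι} {g : (∀ i, X i) → F}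
    (hg : DependsOn g A) (u v : ∀ i, X i) : marginal μ A g u = marginal μ A g v := by
  refine integral_congr_ae (.of_forall fun y => hg fun i hi => ?_)
  simp [Function.updateFinset, Finset.mem_coe.1 hi]

variable (μ : ∀ i, Measure (X i)) [∀ i, SigmaFinite (μ i)] {A : Finset ι} {s : ι}

theorem exists_measurePreserving_updateFinset_insert (hs : s ∉ A) :
    ∃ e : X s × (∀ i : A, X i) ≃ᵐ (∀ i : ↥(insert s A), X i),
      MeasurePreserving e ((μ s).prod (Measure.pi fun i : A => μ i))
        (Measure.pi fun i : ↥(insert s A) => μ i) ∧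
      ∀ u p, Function.updateFinset u (insert s A) (e p) =
        Function.updateFinset (Function.update u s p.1) A p.2 := by
  rw [Finset.insert_eq]
  have hd : Disjoint {s} A := Finset.disjoint_singleton_left.2 hs
  refine ⟨((MeasurableEquiv.piUnique fun i : ({s} : Finset ι) => X i).symm.prodCongr
    (MeasurableEquiv.refl _)).trans (MeasurableEquiv.piFinsetUnion X hd), ?_, fun u p => ?_⟩
  · exact (measurePreserving_piFinsetUnion hd μ).comp
      ((measurePreserving_piUnique fun i : ({s} : Finset ι) => μ i).symm.prod (.id _))
  · rw [Function.update_eq_updateFinset, Function.updateFinset_updateFinset hd]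
    rfl

variable {μ} {g : (∀ i, X i) → F} {u : ∀ i, X i}

theorem integrable_and_integral_marginal_update (hs : s ∉ A)
    (hg : Integrable (fun y => g (Function.updateFinset u (insert s A) y))
      (Measure.pi fun i : ↥(insert s A) => μ i)) :
    Integrable (fun z => marginal μ A g (Function.update u s z)) (μ s) ∧
      ∫ z, marginal μ A g (Function.update u s z) ∂μ s = marginal μ (insert s A) g u := by
  obtain ⟨e, he, he_update⟩ := exists_measurePreserving_updateFinset_insert μ hs
  have hg' : Integrable (fun p : X s × (∀ i : A, X i) =>
      g (Function.updateFinset (Function.update u s p.1) A p.2))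
      ((μ s).prod (Measure.pi fun i : A => μ i)) := by
    simpa only [← he_update, Function.comp_def] using
      (he.integrable_comp_emb e.measurableEmbedding).2 hg
  refine ⟨hg'.integral_prod_left, ?_⟩
  simp only [marginal]
  rw [← integral_prod _ hg', ← he.integral_comp e.measurableEmbedding]
  simp only [he_update]

end Marginal

section Weight

theorem prod_crossings_insert {n : ℕ} {M : Type*} [CommMonoid M] {V : Finset (Fin n × Fin n)}
    {p : Fin n × Fin n} (hV : p ∉ V) (hp : ∀ r ∈ V, r.2 < p.2)
    (G : Fin n × Fin n → Fin n × Fin n → M) :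
    ∏ c ∈ crossings n (insert p V), G c.1 c.2 =
      (∏ r ∈ V with r.1 < p.1 ∧ p.1 < r.2, G r p) * ∏ c ∈ crossings n V, G c.1 c.2 := by
  have hold : ∀ r ∈ V, ¬(p.1 < r.1 ∧ r.1 < p.2 ∧ p.2 < r.2) := fun r hr h => (hp r hr).asymm h.2.2
  have hnew : ∀ r ∈ V, (r.1 < p.1 ∧ p.1 < r.2 ∧ r.2 < p.2 ↔ r.1 < p.1 ∧ p.1 < r.2) :=
    fun r hr => by simp only [hp r hr, and_true]
  simp only [crossings, Finset.prod_filter, Finset.prod_product, Finset.prod_insert hV,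
    Finset.prod_mul_distrib, lt_irrefl, false_and, if_false, one_mul]
  rw [Finset.prod_congr rfl fun r hr => if_neg (hold r hr), Finset.prod_const_one, one_mul,
    Finset.prod_congr rfl fun r hr => if_congr (hnew r hr) rfl rfl]

variable {E : Type*} {n m : ℕ} (f : Fin n → E → ℝ) (Q : E → E → ℝ)

/-- The summand of an `m`-particle wave function attached to the partial pairing `(V, L)`, before
integration: `u p` is the common variable of the two points of the pair `p`, and `x i` is the
variable of the open point `L i`.  There is a factor `Q` for each crossing of two pairs and for
each open point under a pair. -/
def weight (V : Finset (Fin n × Fin n)) (L : Fin m → Fin n) (x : Fin m → E)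
    (u : Fin n × Fin n → E) : ℝ :=
  (∏ p ∈ V, f p.1 (u p) * f p.2 (u p)) * (∏ c ∈ crossings n V, Q (u c.1) (u c.2)) *
    ∏ i, f (L i) (x i) * ∏ p ∈ V with p.1 < L i ∧ L i < p.2, Q (u p) (x i)

theorem weight_empty (L : Fin 0 → Fin n) (x : Fin 0 → E) : weight f Q ∅ L x = 1 := by
  ext u
  simp [weight, crossings]

variable {f Q} {V : Finset (Fin n × Fin n)} {t : Fin n}

theorem dependsOn_weight {L : Fin m → Fin n} {x : Fin m → E} :
    DependsOn (weight f Q V L x) (V : Set (Fin n × Fin n)) := by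
  intro u v h
  simp only [Finset.mem_coe] at h
  unfold weight
  congr 1
  · congr 1
    · exact Finset.prod_congr rfl fun p hp => by rw [h p hp]
    · refine Finset.prod_congr rfl fun c hc => ?_
      obtain ⟨h₁, h₂⟩ := Finset.mem_product.1 (Finset.mem_filter.1 hc).1
      rw [h _ h₁, h _ h₂]
  · refine Finset.prod_congr rfl fun i _ => ?_
    congr 1
    exact Finset.prod_congr rfl fun p hp => by rw [h p (Finset.mem_filter.1 hp).1]

theorem weight_cons {L : Fin m → Fin n} (h : IsPartialPairing t V L) (x : Fin (m + 1) → E) :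
    weight f Q V (Fin.cons t L : Fin (m + 1) → Fin n) x =
      f t (x 0) • weight f Q V L (x ∘ Fin.succ) := by
  have hV : (V.filter fun p => p.1 < t ∧ t < p.2) = ∅ :=
    Finset.filter_eq_empty_iff.2 fun p hp hpt => (h.snd_lt p hp).asymm hpt.2
  ext u
  simp only [weight, Fin.prod_univ_succ, Fin.cons_zero, Fin.cons_succ, hV, Finset.prod_empty,
    Function.comp_apply, Pi.smul_apply, smul_eq_mul]
  ring

theorem weight_insert_pair {L : Fin (m + 1) → Fin n} (h : IsPartialPairing t V L)
    (k : Fin (m + 1)) (x : Fin m → E) (u : Fin n × Fin n → E) :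
    weight f Q (insert (L k, t) V) (k.removeNth L) x u =
      f t (u (L k, t)) *
        ((∏ i ∈ Finset.univ.filter (fun i : Fin m => (i : ℕ) < k), Q (u (L k, t)) (x i)) *
          weight f Q V L (k.insertNth (u (L k, t)) x) u) := by
  have hV : (L k, t) ∉ V := h.pair_notMem _
  have hL : ∀ i : Fin m, L (k.succAbove i) < t := fun i => ((h.mem_range_iff _).1 ⟨_, rfl⟩).1
  have hlt : ∀ i : Fin m, L k < L (k.succAbove i) ↔ (i : ℕ) < k := fun i => by
    rw [h.strictAnti.lt_iff_gt, Fin.succAbove_lt_iff_castSucc_lt, Fin.lt_def, Fin.val_castSucc]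
  have hopen : ∀ i : Fin m,
      (∏ p ∈ insert (L k, t) V with p.1 < L (k.succAbove i) ∧ L (k.succAbove i) < p.2,
          Q (u p) (x i)) =
        (if (i : ℕ) < k then Q (u (L k, t)) (x i) else 1) *
          ∏ p ∈ V with p.1 < L (k.succAbove i) ∧ L (k.succAbove i) < p.2, Q (u p) (x i) := by
    intro i
    simp only [Finset.prod_filter, Finset.prod_insert hV, hlt, hL, and_true]
  calc
    _ = (∏ p ∈ insert (L k, t) V, f p.1 (u p) * f p.2 (u p)) *
          (∏ c ∈ crossings n (insert (L k, t) V), Q (u c.1) (u c.2)) *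
        ∏ i, f (L (k.succAbove i)) (x i) * ∏ p ∈ insert (L k, t) V with
          p.1 < L (k.succAbove i) ∧ L (k.succAbove i) < p.2, Q (u p) (x i) := rfl
    _ = _ := by
      simp only [hopen, Finset.prod_insert hV,
        prod_crossings_insert hV h.snd_lt fun p r => Q (u p) (u r)]
      simp only [weight, Fin.prod_univ_succAbove _ k, Fin.insertNth_apply_same,
        Fin.insertNth_apply_succAbove, Finset.prod_mul_distrib,
        Finset.prod_filter (fun i : Fin m => (i : ℕ) < k)]
      ring

theorem integrable_weight [MeasurableSpace E] {μ : Measure E} [SigmaFinite μ]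
    (hf : ∀ i, MemLp (f i) 2 μ) (hQ : Measurable Q.uncurry) {C : ℝ} (hC : ∀ x y, |Q x y| ≤ C)
    (V : Finset (Fin n × Fin n)) (L : Fin m → Fin n) (x : Fin m → E) (u : Fin n × Fin n → E) :
    Integrable (fun y => weight f Q V L x (Function.updateFinset u V y))
      (Measure.pi fun _ : V => μ) := by
  have hpairs : Integrable (fun y : V → E => ∏ p : V, f p.1.1 (y p) * f p.1.2 (y p))
      (Measure.pi fun _ => μ) :=
    Integrable.fintype_prod fun p : V => (hf p.1.1).integrable_mul (hf p.1.2)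
  let B : (Fin n × Fin n → E) → ℝ := fun u =>
    (∏ c ∈ crossings n V, Q (u c.1) (u c.2)) *
      ∏ i, f (L i) (x i) * ∏ p ∈ V with p.1 < L i ∧ L i < p.2, Q (u p) (x i)
  have hB_meas : Measurable B := by
    have : ∀ g h : (Fin n × Fin n → E) → E, Measurable g → Measurable h →
      Measurable fun u => Q (g u) (h u) := fun g h hg hh => hQ.comp (hg.prodMk hh)
    fun_prop (disch := assumption)
  have hB_bound : ∀ u, ‖B u‖ ≤ (∏ _c ∈ crossings n V, C) *
      ∏ i, |f (L i) (x i)| * ∏ p ∈ V with p.1 < L i ∧ L i < p.2, C := fun u => by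
    simp only [B, Real.norm_eq_abs, abs_mul, Finset.abs_prod]
    gcongr with c _ i _
    · exact Finset.prod_nonneg fun c _ => (abs_nonneg _).trans (hC (u c.1) (u c.2))
    all_goals apply hC
  refine (hpairs.mul_bdd (hB_meas.comp measurable_updateFinset).aestronglyMeasurable
    (.of_forall fun y => hB_bound (Function.updateFinset u V y))).congr (.of_forall fun y => ?_)
  simp only [B, weight, Function.comp_apply, mul_assoc]
  congr 1
  rw [← Finset.prod_coe_sort V]
  exact Finset.prod_congr rfl fun p _ => by simp [Function.updateFinset]

end Weight

section MarginalWeight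

variable {E : Type*} [MeasurableSpace E] {μ : Measure E} {n m : ℕ} {f : Fin n → E → ℝ}
  {Q : E → E → ℝ} {V : Finset (Fin n × Fin n)} {t : Fin n}

theorem marginal_weight_cons {L : Fin m → Fin n} (h : IsPartialPairing t V L)
    (x : Fin (m + 1) → E) (u : Fin n × Fin n → E) :
    marginal (fun _ => μ) V (weight f Q V (Fin.cons t L : Fin (m + 1) → Fin n) x) u =
      f t (x 0) * marginal (fun _ => μ) V (weight f Q V L (x ∘ Fin.succ)) u := by
  simp only [marginal, weight_cons h, Pi.smul_apply, smul_eq_mul, integral_const_mul]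

variable {L : Fin (m + 1) → Fin n}

theorem marginal_weight_insert_pair (h : IsPartialPairing t V L) (k : Fin (m + 1))
    (x : Fin m → E) (u : Fin n × Fin n → E) (z : E) :
    marginal (fun _ => μ) V (weight f Q (insert (L k, t) V) (k.removeNth L) x)
        (Function.update u (L k, t) z) =
      f t z * ((∏ i ∈ Finset.univ.filter (fun i : Fin m => (i : ℕ) < k), Q z (x i)) *
        marginal (fun _ => μ) V (weight f Q V L (k.insertNth z x)) u) := by
  rw [marginal_eq_of_dependsOn _ dependsOn_weight u (Function.update u (L k, t) z)]
  simp only [marginal, ← integral_const_mul, weight_insert_pair h, Function.updateFinset,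
    h.pair_notMem, dite_false, Function.update_self]

theorem integrable_and_integral_marginal_weight [SigmaFinite μ] (hf : ∀ i, MemLp (f i) 2 μ)
    (hQ : Measurable Q.uncurry) {C : ℝ} (hC : ∀ x y, |Q x y| ≤ C) (h : IsPartialPairing t V L)
    (k : Fin (m + 1)) (x : Fin m → E) (u : Fin n × Fin n → E) :
    Integrable (fun z => f t z *
      ((∏ i ∈ Finset.univ.filter (fun i : Fin m => (i : ℕ) < k), Q z (x i)) *
        marginal (fun _ => μ) V (weight f Q V L (k.insertNth z x)) u)) μ ∧
    ∫ z, f t z * ((∏ i ∈ Finset.univ.filter (fun i : Fin m => (i : ℕ) < k), Q z (x i)) *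
        marginal (fun _ => μ) V (weight f Q V L (k.insertNth z x)) u) ∂μ =
      marginal (fun _ => μ) (insert (L k, t) V)
        (weight f Q (insert (L k, t) V) (k.removeNth L) x) u := by
  simp only [← marginal_weight_insert_pair h k x u]
  exact integrable_and_integral_marginal_update (X := fun _ => E) (μ := fun _ => μ)
    (g := weight f Q (insert (L k, t) V) (k.removeNth L) x) (h.pair_notMem _)
    (integrable_weight hf hQ hC (insert (L k, t) V) (k.removeNth L) x u)

end MarginalWeight

section WickVector

variable {j n : ℕ}

/-- The vector `w(f_{t-1}) ⋯ w(f_0) Ω`, as the sum over partial pairings of `0, …, t - 1` to which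
the Wick expansion leads. -/
def wickVector (U : Set (EuclideanSpace ℝ (Fin j)))
    (Q : EuclideanSpace ℝ (Fin j) → EuclideanSpace ℝ (Fin j) → ℝ)
    (f : Fin n → EuclideanSpace ℝ (Fin j) → ℝ) (t : ℕ) : FockFun j :=
  fun m x => ∑ σ ∈ partialPairings n t m,
    marginal (fun _ => volume.restrict U) σ.1 (weight f Q σ.1 σ.2 x) 0

variable {U : Set (EuclideanSpace ℝ (Fin j))}
  {Q : EuclideanSpace ℝ (Fin j) → EuclideanSpace ℝ (Fin j) → ℝ}
  {f : Fin n → EuclideanSpace ℝ (Fin j) → ℝ}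

theorem wickVector_zero : wickVector U Q f 0 = vac j := by
  funext m x
  rcases m.eq_zero_or_pos with rfl | hm
  · have : partialPairings n 0 0 = {(∅, Fin.elim0)} := by
      ext ⟨V, L⟩
      simp [mem_partialPairings, IsPartialPairing.zero_iff, Subsingleton.elim L Fin.elim0]
    simp [wickVector, this, marginal_empty, weight_empty, vac]
  · have : partialPairings n 0 m = ∅ := by
      ext ⟨V, L⟩
      simp [mem_partialPairings, IsPartialPairing.zero_iff, hm.ne']
    simp [wickVector, this, vac, hm.ne']

theorem crOp_wickVector (t : Fin n) (m : ℕ) (x : Fin m → EuclideanSpace ℝ (Fin j)) :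
    crOp j (f t) (wickVector U Q f t) m x =
      ∑ σ ∈ partialPairings n (t + 1) m with t ∈ Set.range σ.2,
        marginal (fun _ => volume.restrict U) σ.1 (weight f Q σ.1 σ.2 x) 0 := by
  cases m with
  | zero => simp [crOp, Set.range_eq_empty]
  | succ m =>
    rw [sum_partialPairings_open t fun σ =>
      marginal (fun _ => volume.restrict U) σ.1 (weight f Q σ.1 σ.2 x) 0]
    simp only [crOp, wickVector, Finset.mul_sum]
    exact Finset.sum_congr rfl fun σ hσ =>
      (marginal_weight_cons (mem_partialPairings.1 hσ) x 0).symm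

variable (hf : ∀ i, MemLp (f i) 2 (volume.restrict U)) (hQ : Measurable Q.uncurry) {C : ℝ}
  (hC : ∀ x y, |Q x y| ≤ C)
include hf hQ hC

theorem anOp_wickVector (t : Fin n) (m : ℕ) (x : Fin m → EuclideanSpace ℝ (Fin j)) :
    anOp j U Q (f t) (wickVector U Q f t) m x =
      ∑ σ ∈ partialPairings n (t + 1) m with t ∉ Set.range σ.2,
        marginal (fun _ => volume.restrict U) σ.1 (weight f Q σ.1 σ.2 x) 0 := by
  rw [sum_partialPairings_closed t fun σ =>
    marginal (fun _ => volume.restrict U) σ.1 (weight f Q σ.1 σ.2 x) 0]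
  have hterm := fun σ (hσ : σ ∈ partialPairings n t (m + 1)) k =>
    integrable_and_integral_marginal_weight hf hQ hC (mem_partialPairings.1 hσ) k x 0
  simp only [anOp, wickVector, Finset.mul_sum]
  rw [integral_finsetSum _ fun k _ => integrable_finsetSum _ fun σ hσ => (hterm σ hσ k).1,
    Finset.sum_congr rfl fun k _ => integral_finsetSum _ fun σ hσ => (hterm σ hσ k).1,
    Finset.sum_comm]
  exact Finset.sum_congr rfl fun σ hσ => Finset.sum_congr rfl fun k _ => (hterm σ hσ k).2

theorem wOp_wickVector (t : Fin n) :
    wOp j U Q (f t) (wickVector U Q f t) = wickVector U Q f (t + 1) := by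
  funext m x
  rw [wOp, anOp_wickVector hf hQ hC, crOp_wickVector, add_comm, wickVector,
    Finset.sum_filter_add_sum_filter_not]

theorem foldl_wOp_vac {t : ℕ} (ht : t ≤ n) :
    (List.ofFn fun i : Fin t => wOp j U Q (f (i.castLE ht))).foldl (fun F g => g F) (vac j) =
      wickVector U Q f t := by
  induction t with
  | zero => exact wickVector_zero.symm
  | succ t ih =>
    rw [List.ofFn_succ', List.concat_eq_append, List.foldl_append]
    exact (congrArg _ (ih (Nat.le_of_succ_le ht))).trans (wOp_wickVector hf hQ hC ⟨t, ht⟩)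

end WickVector

theorem exists_measurable_eqOn_of_domRestrict {α : Type*} [MeasurableSpace α] {s : Set α}
    (hs : MeasurableSet s) {g : α → ℝ} (hg : Measurable (s.domRestrict g)) {C : ℝ}
    (hC : ∀ x ∈ s, |g x| ≤ C) :
    ∃ g' : α → ℝ, Measurable g' ∧ Set.EqOn g g' s ∧ ∀ x, |g' x| ≤ |C| := by
  refine ⟨s.piecewise g 0, measurable_of_restrict_of_restrict_compl hs ?_ ?_,
    (s.piecewise_eqOn g 0).symm, fun x => ?_⟩
  · rwa [Set.domRestrict_piecewise]
  · rw [Set.domRestrict_piecewise_compl]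
    exact measurable_const
  · by_cases hx : x ∈ s
    · simpa only [Set.piecewise_eq_of_mem _ _ _ hx] using (hC x hx).trans (le_abs_self C)
    · simp [hx]

section RestrictionToDomain

variable {j n : ℕ} {U : Set (EuclideanSpace ℝ (Fin j))}
  {Q Q' : EuclideanSpace ℝ (Fin j) → EuclideanSpace ℝ (Fin j) → ℝ}

/-- Equality of two Fock vectors as families of functions on the powers of `U`: the operators only
involve these restrictions, but `FockFun` records functions on the powers of the whole space. -/
def FockFun.EqOn (U : Set (EuclideanSpace ℝ (Fin j))) (F G : FockFun j) : Prop :=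
  ∀ m x, (∀ i, x i ∈ U) → F m x = G m x

theorem FockFun.EqOn.vacExp_eq {F G : FockFun j} (h : F.EqOn U G) : vacExp j F = vacExp j G :=
  h 0 _ fun i => i.elim0

variable (hU : MeasurableSet U) (hQ : ∀ x ∈ U, ∀ y ∈ U, Q x y = Q' x y)
include hU hQ

theorem FockFun.EqOn.wOp_congr {F G : FockFun j} (h : F.EqOn U G)
    (g : EuclideanSpace ℝ (Fin j) → ℝ) : (wOp j U Q g F).EqOn U (wOp j U Q' g G) := by
  intro m x hx
  have han : anOp j U Q g F m x = anOp j U Q' g G m x := by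
    refine setIntegral_congr_fun hU fun y hy => ?_
    have hF : ∀ k, F (m + 1) (Fin.insertNth k y x) = G (m + 1) (Fin.insertNth k y x) := fun k =>
      h _ _ (k.forall_iff_succAbove.2 ⟨by simpa using hy, by simpa using hx⟩)
    simp only [hQ y hy _ (hx _), hF]
  have hcr : crOp j g F m x = crOp j g G m x := by
    cases m with
    | zero => rfl
    | succ m => exact congrArg _ (h m _ fun i => hx i.succ)
  exact congrArg₂ _ han hcr

theorem FockFun.EqOn.foldl_wOp_congr {F G : FockFun j} (h : F.EqOn U G)
    (l : List (EuclideanSpace ℝ (Fin j) → ℝ)) :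
    ((l.map (wOp j U Q)).foldl (fun F g => g F) F).EqOn U
      ((l.map (wOp j U Q')).foldl (fun F g => g F) G) := by
  induction l generalizing F G with
  | nil => exact h
  | cons g _ ih => exact ih (h.wOp_congr hU hQ g)

theorem pairingIntegral_congr (f : Fin n → EuclideanSpace ℝ (Fin j) → ℝ)
    (V : Finset (Fin n × Fin n)) : pairingIntegral j n U Q f V = pairingIntegral j n U Q' f V := by
  have hpow : MeasurableSet {x : V → EuclideanSpace ℝ (Fin j) | ∀ p, x p ∈ U} := by
    simpa only [Set.pi, Set.mem_univ, true_imp_iff] using MeasurableSet.univ_pi fun _ : V => hU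
  refine setIntegral_congr_fun hpow fun x hx => ?_
  simp only [hQ _ (hx _) _ (hx _)]

end RestrictionToDomain

section WickFormula

variable {j n : ℕ} {U : Set (EuclideanSpace ℝ (Fin j))}
  {Q : EuclideanSpace ℝ (Fin j) → EuclideanSpace ℝ (Fin j) → ℝ}
  {f : Fin n → EuclideanSpace ℝ (Fin j) → ℝ}

theorem marginal_weight_elim0 (V : Finset (Fin n × Fin n))
    (x : Fin 0 → EuclideanSpace ℝ (Fin j)) (u : Fin n × Fin n → EuclideanSpace ℝ (Fin j)) :
    marginal (fun _ => volume.restrict U) V (weight f Q V Fin.elim0 x) u =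
      pairingIntegral j n U Q f V := by
  have hset : {y : V → EuclideanSpace ℝ (Fin j) | ∀ p, y p ∈ U} =
      Set.univ.pi fun _ => U := by
    simp only [Set.pi, Set.mem_univ, true_imp_iff]
  rw [marginal, pairingIntegral, hset, volume_pi, Measure.restrict_pi_pi]
  congr 1
  funext y
  have hy : ∀ p : V, Function.updateFinset u V y p = y p := fun p => by
    simp [Function.updateFinset]
  rw [weight, Fin.prod_univ_zero, mul_one, ← Finset.prod_coe_sort V,
    ← Finset.prod_attach (crossings n V)]
  congr 1
  · simp only [hy]
  · exact Finset.prod_congr rfl fun c _ => congrArg₂ Q (hy ⟨c.1.1, _⟩) (hy ⟨c.1.2, _⟩)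

theorem vacExp_wickVector :
    vacExp j (wickVector U Q f n) = ∑ V with IsPairing n V, pairingIntegral j n U Q f V := by
  rw [vacExp, wickVector, sum_partialPairings_isPairing fun σ =>
    marginal (fun _ => volume.restrict U) σ.1 (weight f Q σ.1 σ.2 _) 0]
  simp only [marginal_weight_elim0]

theorem field_operator_wick_formula_general (hU : MeasurableSet U)
    (hQ : Measurable ((U ×ˢ U).domRestrict fun p => Q p.1 p.2)) {C : ℝ}
    (hC : ∀ x ∈ U, ∀ y ∈ U, |Q x y| ≤ C) (hf : ∀ i, MemLp (f i) 2 (volume.restrict U)) :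
    (vacExp j
        ((List.ofFn (fun i : Fin n => wOp j U Q (f i))).foldl (fun F g => g F) (vac j)) =
      ∑ V ∈ Finset.univ.filter (fun V => IsPairing n V), pairingIntegral j n U Q f V) ∧
    (Odd n →
      vacExp j
        ((List.ofFn (fun i : Fin n => wOp j U Q (f i))).foldl (fun F g => g F) (vac j)) = 0) := by
  obtain ⟨Q', hQ'_meas, hQQ', hQ'_bound⟩ := exists_measurable_eqOn_of_domRestrict (hU.prod hU) hQ
    fun p hp => hC p.1 hp.1 p.2 hp.2
  replace hQQ' : ∀ x ∈ U, ∀ y ∈ U, Q x y = Q'.curry x y := fun x hx y hy =>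
    hQQ' (Set.mk_mem_prod hx hy)
  have hwick : vacExp j ((List.ofFn fun i => wOp j U Q (f i)).foldl (fun F g => g F) (vac j)) =
      ∑ V with IsPairing n V, pairingIntegral j n U Q f V := by
    have hcongr := FockFun.EqOn.foldl_wOp_congr hU hQQ' (F := vac j) (fun _ _ _ => rfl)
      (List.ofFn f)
    rw [List.map_ofFn, List.map_ofFn] at hcongr
    calc
      _ = vacExp j ((List.ofFn fun i => wOp j U Q'.curry (f i)).foldl (fun F g => g F) (vac j)) :=
        hcongr.vacExp_eq
      _ = vacExp j (wickVector U Q'.curry f n) :=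
        congrArg _ (foldl_wOp_vac (Q := Q'.curry) hf hQ'_meas (fun x y => hQ'_bound (x, y)) le_rfl)
      _ = _ := by simp only [vacExp_wickVector, pairingIntegral_congr hU hQQ']
  refine ⟨hwick, fun hn => hwick.trans (Finset.sum_eq_zero fun V hV => ?_)⟩
  exact absurd (Finset.mem_filter.1 hV).2.even (Nat.not_even_iff_odd.2 hn)

end WickFormula

/-- The `Q`-deformed Wick formula for the field operators (Corollary `vac` of the paper):
`⟨w(f_n) ⋯ w(f_1) Ω, Ω⟩ = Σ_{V ∈ P({1,…,n})} ∫⋯∫ f_n(x_n)⋯f_1(x_1)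
Π_{crossings} Q(x_{a_k}, x_{a_l}) Π_{(a,z)∈V} δ(x_a − x_z) dx`.
In particular the moment vanishes when `n` is odd. -/
theorem field_operator_wick_formula
    (j n : ℕ) (U : Set (EuclideanSpace ℝ (Fin j))) (hU : IsOpen U) (hUne : U.Nonempty)
    (Q : EuclideanSpace ℝ (Fin j) → EuclideanSpace ℝ (Fin j) → ℝ)
    (q : ℝ) (hq : q < 1)
    (hQc : ContinuousOn (fun p : EuclideanSpace ℝ (Fin j) × EuclideanSpace ℝ (Fin j) =>
      Q p.1 p.2) (U ×ˢ U))
    (hQs : ∀ x ∈ U, ∀ y ∈ U, Q x y = Q y x)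
    (hQb : ∀ x ∈ U, ∀ y ∈ U, |Q x y| ≤ q)
    (f : Fin n → (EuclideanSpace ℝ (Fin j) → ℝ))
    (hfc : ∀ i, Continuous (f i)) (hfs : ∀ i, HasCompactSupport (f i))
    (hfU : ∀ i, Function.support (f i) ⊆ U) :
    (vacExp j
        ((List.ofFn (fun i : Fin n => wOp j U Q (f i))).foldl (fun F g => g F) (vac j)) =
      ∑ V ∈ Finset.univ.filter (fun V => IsPairing n V), pairingIntegral j n U Q f V) ∧
    (Odd n →
      vacExp j
        ((List.ofFn (fun i : Fin n => wOp j U Q (f i))).foldl (fun F g => g F) (vac j)) = 0) := by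
  exact field_operator_wick_formula_general hU.measurableSet
    (continuousOn_iff_continuous_domRestrict.1 hQc).measurable hQb
    fun i => ((hfc i).memLp_of_hasCompactSupport (hfs i)).restrict U

end
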